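/- (Theorem 2.5) For every η ∈ S_{L,M}, the decomposition linearizes the time evolution of the box-ball system with box capacity L: Λ(c(η)) = c(T_L(η)) and T_1(d(η)) = d(T_L(η)); that is, under one step of T_L the background sequence is shifted one site to the right and the soliton sequence evolves by one step of the box-ball system with box capacity one. -/

import Mathlib

namespace BBS

attribute [local instance] Classical.propDecidable

noncomputable section

/-- Carrier sequence with initial load `m` for box capacity `L`. -/
def carrierM (L m : ℤ) (η : ℕ → ℤ) : ℕ → ℤ
  | 0 => m
  | j + 1 => η j + max 0 (η j + carrierM L m η j - L)

/-- Carrier sequence (initial load `0`). -/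
def carrier (L : ℤ) (η : ℕ → ℤ) : ℕ → ℤ := carrierM L 0 η

/-- Time evolution `T_L`. -/
def evol (L : ℤ) (η : ℕ → ℤ) (j : ℕ) : ℤ := min (L - η j) (carrier L η j)

/-- Time evolution `T_1^m` on binary sequences. -/
def evolOne (m : ℤ) (w : ℕ → ℤ) (j : ℕ) : ℤ := min (1 - w j) (carrierM 1 m w j)

/-- Membership in `S_{L,M}`. -/
def mem_S (L M : ℤ) (η : ℕ → ℤ) : Prop :=
  (∃ N : ℕ, ∀ j, N ≤ j → η j = 0) ∧
  (∀ j, -M ≤ η j ∧ η j ≤ L + M) ∧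
  η 0 ≤ 0 ∧
  (∀ j, max (-η j) (η j - L) ≤ M) ∧
  (∃ j, max (-η j) (η j - L) = M) ∧
  (∀ i : ℕ, ∑ j ∈ Finset.range (i + 2), η j ≤ ∑ j ∈ Finset.range (i + 1), (L - η j))

/-- Auxiliary sequence for the backward carrier. -/
def backAux (L : ℤ) (η : ℕ → ℤ) (x : ℕ) : ℕ → ℤ
  | 0 => 0
  | n + 1 => η (x - n - 1) + max 0 (η (x - n - 1) + backAux L η x n - L)

/-- Backward carrier `ū` computed from the index `x`. -/
def backCarrier (L : ℤ) (η : ℕ → ℤ) (x j : ℕ) : ℤ :=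
  if x ≤ j then 0 else backAux L η x (x - j)

/-- Reverse time evolution `R_L` computed from the index `x`. -/
def revol (L : ℤ) (η : ℕ → ℤ) (x j : ℕ) : ℤ :=
  if j < x then min (L - η j) (backCarrier L η x (j + 1)) else 0

/-- The concatenated word sequence `r_K(η)`. -/
def rSeq (L M : ℕ) (K : Set ℕ) (η : ℕ → ℤ) (n : ℕ) : ℤ :=
  if (n / (L + 2 * M) ∈ K ∧ ((n % (L + 2 * M) : ℕ) : ℤ) < η (n / (L + 2 * M)) + M) ∨
      (n / (L + 2 * M) ∉ K ∧
        (L : ℤ) + 2 * M - (η (n / (L + 2 * M)) + M) ≤ ((n % (L + 2 * M) : ℕ) : ℤ))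
  then 1 else 0

/-- The concatenated word sequence `l_K(η)`. -/
def lSeq (L M : ℕ) (K : Set ℕ) (η : ℕ → ℤ) (n : ℕ) : ℤ :=
  if (n / (L + 2 * M) ∈ K ∧
        (L : ℤ) + 2 * M - (η (n / (L + 2 * M)) + M) ≤ ((n % (L + 2 * M) : ℕ) : ℤ)) ∨
      (n / (L + 2 * M) ∉ K ∧ ((n % (L + 2 * M) : ℕ) : ℤ) < η (n / (L + 2 * M)) + M)
  then 1 else 0

/-- Soliton flag sequence `a(η)`. -/
def flag (L : ℤ) (η : ℕ → ℤ) : ℕ → ℤ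
  | 0 => 0
  | j + 1 =>
    if η j + η (j + 1) < L then 0
    else if η j + η (j + 1) = L then flag L η j else 1

/-- Primed soliton flag sequence `a′(η)` (with the convention `a′_{-1} = 0`). -/
def flag' (L : ℤ) (η : ℕ → ℤ) : ℕ → ℤ
  | 0 => if η 0 + η 1 < L then 0 else if η 0 + η 1 = L then 0 else 1
  | j + 1 =>
    if η (j + 1) + η (j + 2) < L then 0
    else if η (j + 1) + η (j + 2) = L then flag' L η j else 1

/-- `I(η)`: right ends of contiguous 1-segments. -/
def Iset (L : ℤ) (η : ℕ → ℤ) : Set ℕ := {j | flag L η j = 1 ∧ flag L η (j + 1) = 0}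

/-- `I′(η)`: left ends of contiguous right-1-segments. -/
def Iset' (L : ℤ) (η : ℕ → ℤ) : Set ℕ :=
  {j | (∀ k, j = k + 1 → flag' L η k = 0) ∧ flag' L η j = 1}

def marked (L : ℤ) (η : ℕ → ℤ) (j : ℕ) : Prop := j ∈ Iset L η ∨ j + 1 ∈ Iset L η

def marked' (L : ℤ) (η : ℕ → ℤ) (j : ℕ) : Prop :=
  j ∈ Iset' L η ∨ ∃ k, j = k + 1 ∧ k ∈ Iset' L η

/-- Arc-count sequence `b̃(η)`. -/
def btilde (L M : ℕ) (η : ℕ → ℤ) (j : ℕ) : ℤ :=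
  if marked (L : ℤ) η j then 0
  else min (η j + M) ((L : ℤ) + 2 * M - (η (j + 1) + M))

/-- `b̃_{j-1}` with the convention `b̃_{-1} = 0`. -/
def bprev (L M : ℕ) (η : ℕ → ℤ) : ℕ → ℤ
  | 0 => 0
  | j + 1 => btilde L M η j

/-- Primed arc-count sequence `b̃′(η)`. -/
def btilde' (L M : ℕ) (η : ℕ → ℤ) : ℕ → ℤ
  | 0 => if marked' (L : ℤ) η 0 then 0 else η 0 + M
  | j + 1 =>
    if marked' (L : ℤ) η (j + 1) then 0
    else min (η (j + 1) + M) ((L : ℤ) + 2 * M - (η j + M))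

/-- Background sequence `c(η)`: subsequence of `b̃` on unmarked indices, lowered by `M`. -/
def bg (L M : ℕ) (η : ℕ → ℤ) (j : ℕ) : ℤ :=
  btilde L M η (Nat.nth (fun i => ¬ marked (L : ℤ) η i) j) - M

/-- Primed background sequence `c′(η)`. -/
def bg' (L M : ℕ) (η : ℕ → ℤ) (j : ℕ) : ℤ :=
  btilde' L M η (Nat.nth (fun i => ¬ marked' (L : ℤ) η i) j) - M

/-- Length of the word corresponding to box `j` in `d̃(η)`. -/
def wordLen (L M : ℕ) (η : ℕ → ℤ) (j : ℕ) : ℕ :=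
  if j ∈ Iset (L : ℤ) η then L + 2 * M
  else ((L : ℤ) + 2 * M - bprev L M η j - btilde L M η j).toNat

def wordStart (L M : ℕ) (η : ℕ → ℤ) (j : ℕ) : ℕ :=
  ∑ k ∈ Finset.range j, wordLen L M η k

/-- Raised soliton word sequence `d̃(η)`. -/
def dTilde (L M : ℕ) (η : ℕ → ℤ) (n : ℕ) : ℤ :=
  if ∃ j, wordStart L M η j ≤ n ∧ n < wordStart L M η (j + 1) ∧
      ((j ∈ Iset (L : ℤ) η ∧ ((n - wordStart L M η j : ℕ) : ℤ) < η j + M) ∨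
        (j ∉ Iset (L : ℤ) η ∧
          (L : ℤ) + 2 * M - (η j + M) - bprev L M η j ≤ ((n - wordStart L M η j : ℕ) : ℤ)))
  then 1 else 0

/-- Length of the word corresponding to box `j` in `d̃′(η)`. -/
def wordLen' (L M : ℕ) (η : ℕ → ℤ) (j : ℕ) : ℕ :=
  if j ∈ Iset' (L : ℤ) η then L + 2 * M
  else ((L : ℤ) + 2 * M - btilde' L M η j - btilde' L M η (j + 1)).toNat

def wordStart' (L M : ℕ) (η : ℕ → ℤ) (j : ℕ) : ℕ :=
  ∑ k ∈ Finset.range j, wordLen' L M η k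

/-- Primed raised soliton word sequence `d̃′(η)`. -/
def dTilde' (L M : ℕ) (η : ℕ → ℤ) (n : ℕ) : ℤ :=
  if ∃ j, wordStart' L M η j ≤ n ∧ n < wordStart' L M η (j + 1) ∧
      ((j ∈ Iset' (L : ℤ) η ∧
          (L : ℤ) + 2 * M - (η j + M) ≤ ((n - wordStart' L M η j : ℕ) : ℤ)) ∨
        (j ∉ Iset' (L : ℤ) η ∧
          ((n - wordStart' L M η j : ℕ) : ℤ) < η j + M - btilde' L M η j))
  then 1 else 0

/-- The sequence `0^{s 1}1^{t 1}0^{s 2}1^{t 2}⋯0^{s N}1^{t N}0^∞`. -/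
def runSeq (N : ℕ) (s t : ℕ → ℕ) (n : ℕ) : ℤ :=
  if ∃ m, 1 ≤ m ∧ m ≤ N ∧
      (∑ k ∈ Finset.Icc 1 (m - 1), (s k + t k)) + s m ≤ n ∧
      n < ∑ k ∈ Finset.Icc 1 m, (s k + t k)
  then 1 else 0

/-- `w = 0^{s 1}1^{t 1}⋯1^{t N}0^∞` is the (maximal) run decomposition of `w`. -/
def IsRunDecomp (N : ℕ) (s t : ℕ → ℕ) (w : ℕ → ℤ) : Prop :=
  (∀ m, 1 ≤ m → m ≤ N → 1 ≤ t m) ∧ (∀ m, 2 ≤ m → m ≤ N → 1 ≤ s m) ∧ w = runSeq N s t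

def shrinkS (M : ℕ) (s : ℕ → ℕ) (m : ℕ) : ℕ := if m = 1 then s 1 - M else s m - 2 * M

def shrinkT (M : ℕ) (t : ℕ → ℕ) (m : ℕ) : ℕ := t m - 2 * M

/-- `d` is the soliton sequence `d(η)`. -/
def IsSolitonSeq (L M : ℕ) (η : ℕ → ℤ) (d : ℕ → ℤ) : Prop :=
  ∃ N s t, IsRunDecomp N s t (dTilde L M η) ∧ d = runSeq N (shrinkS M s) (shrinkT M t)

/-- `d` is the primed soliton sequence `d′(η)`. -/
def IsSolitonSeq' (L M : ℕ) (η : ℕ → ℤ) (d : ℕ → ℤ) : Prop :=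
  ∃ N s t, IsRunDecomp N s t (dTilde' L M η) ∧ d = runSeq N (shrinkS M s) (shrinkT M t)

/-- Forward shift `Λ`. -/
def lam (c : ℕ → ℤ) : ℕ → ℤ
  | 0 => 0
  | j + 1 => c j

/-- Membership in the background space `S^{(b)}_{L,M}`. -/
def mem_Sb (L M : ℤ) (c : ℕ → ℤ) : Prop := mem_S L M c ∧ ∀ j, c j + c (j + 1) ≤ L

/-- Membership in the soliton space `S^{(f)}_L`: a binary sequence with finitely many
ones all of whose maximal runs of equal letters have length greater than `L`. -/
def mem_Sf (L : ℕ) (w : ℕ → ℤ) : Prop :=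
  (∀ n, w n = 0 ∨ w n = 1) ∧ (∃ N : ℕ, ∀ n, N ≤ n → w n = 0) ∧
  ∀ n m : ℕ, n ≤ m → (∀ j, n ≤ j → j ≤ m → w j = w n) →
    (n = 0 ∨ w (n - 1) ≠ w n) → w (m + 1) ≠ w m → L < m + 1 - n

/-- Stages of the iterative arc-pairing construction: at each stage, connect every pair
`i < j` of yet-unpaired positions with `w i = a`, `w j = b` such that every position
strictly between them is already paired. -/
def arcStage (a b : ℤ) (w : ℕ → ℤ) : ℕ → Set (ℕ × ℕ)
  | 0 => ∅
  | k + 1 => arcStage a b w k ∪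
      {p : ℕ × ℕ | p.1 < p.2 ∧ w p.1 = a ∧ w p.2 = b ∧
        (∀ q ∈ arcStage a b w k, p.1 ≠ q.1 ∧ p.1 ≠ q.2 ∧ p.2 ≠ q.1 ∧ p.2 ≠ q.2) ∧
        (∀ m, p.1 < m → m < p.2 → ∃ q ∈ arcStage a b w k, m = q.1 ∨ m = q.2)}

/-- The arc pairing: `arcPairing 1 0 w` is the 10-arc pairing of `w`, and
`arcPairing 0 1 w` is the 01-arc pairing of `w`. -/
def arcPairing (a b : ℤ) (w : ℕ → ℤ) : Set (ℕ × ℕ) := ⋃ k, arcStage a b w k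

/-- Extension of `η` to integer indices with `η_j = L` for `j < 0`. -/
def etaExt (L : ℕ) (η : ℕ → ℤ) (j : ℤ) : ℤ := if j < 0 then (L : ℤ) else η j.toNat

end

end BBS

open BBS


/-!
Read a state `η` as a lattice path whose `j`-th step is `x_j = η_{j-1} + η_j - L`: the word
`1^{x_j}` if `x_j > 0` and `0^{-x_j}` if `x_j < 0`. Its current direction is the soliton flag, and
its peaks are the elements of `I(η)`. Removing the background from `d̃(η)` leaves `0^M` followed by
this path with `1^{L+2M} 0^{L+2M}` inserted at every peak, so `d(η)` is the path with `1^L 0^L`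
inserted at every peak.

`T_1` sends the path of `η` to that of `T_L(η)` without its initial `0^L`, and on the way turns
each inserted peak `1^L 0^L` into a valley `0^L 1^L`. The set `I(η)` is exactly the set of valleys
of the path of `T_L(η)`, so `0^L T_1(d(η))` is the path of `T_L(η)` with all its valleys deepened.
Moving the `0^L` of each valley back to the preceding peak turns deepened valleys into heightened
peaks; the `0^L` of the first valley moves to the front and cancels, which leaves `d(T_L(η))`.

With `θ = T_L(η)`, both `0 c(η)` and `c(θ)` list `θ_j` over the boxes that the path of `θ` crosses
with flag `0` on both sides and `L - θ_j` over those with flag `1` on both sides, in the same order.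
-/

namespace BBS

open Filter




section Words

variable {α : Type*}

/-- The finite word `X` is an initial segment of the sequence `w`. -/
def IsPrefix (X : List α) (w : ℕ → α) : Prop := ∀ i (h : i < X.length), X[i] = w i

theorem isPrefix_nil (w : ℕ → α) : IsPrefix [] w := fun i h => absurd h (Nat.not_lt_zero i)

theorem isPrefix_cons_iff {a : α} {X : List α} {w : ℕ → α} :
    IsPrefix (a :: X) w ↔ a = w 0 ∧ IsPrefix X (fun i => w (i + 1)) := by
  refine ⟨fun h => ⟨h 0 (by simp), fun i hi => h (i + 1) (by simpa using hi)⟩, ?_⟩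
  rintro ⟨h0, h⟩ (_ | i) hi
  · exact h0
  · exact h i (by simpa using hi)

theorem isPrefix_append_iff {X Y : List α} {w : ℕ → α} :
    IsPrefix (X ++ Y) w ↔ IsPrefix X w ∧ IsPrefix Y (fun i => w (X.length + i)) := by
  induction X generalizing w with
  | nil => simp [isPrefix_nil]
  | cons a X ih =>
    simp only [List.cons_append, isPrefix_cons_iff, ih, and_assoc, List.length_cons,
      Nat.add_right_comm _ 1]

theorem IsPrefix.eq_of_length_eq {X Y : List α} {w : ℕ → α} (hX : IsPrefix X w)
    (hY : IsPrefix Y w) (h : X.length = Y.length) : X = Y :=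
  List.ext_getElem h fun i hi hi' => (hX i hi).trans (hY i hi').symm

theorem IsPrefix.apply_eq_of_append_eq {X Y A B : List α} {w w' : ℕ → α} (hX : IsPrefix X w)
    (hY : IsPrefix Y w') (h : X ++ A = Y ++ B) {n : ℕ} (hnX : n < X.length)
    (hnY : n < Y.length) : w n = w' n := by
  have hn : n < (X ++ A).length := by simp only [List.length_append]; omega
  rw [← hX n hnX, ← hY n hnY, ← List.getElem_append_left (bs := A) hnX,
    ← List.getElem_append_left (bs := B) hnY]
  exact List.getElem_of_eq h hn

/-- The power `bⁿ` of a letter. Exponents are integers so that differences of box contents need no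
casts; negative powers are empty. -/
def rep (b : α) (n : ℤ) : List α := List.replicate n.toNat b

@[simp]
theorem rep_zero (b : α) : rep b 0 = [] := rfl

@[simp]
theorem length_rep (b : α) (n : ℤ) : (rep b n).length = n.toNat := List.length_replicate

theorem rep_add_one (b : α) {n : ℤ} (hn : 0 ≤ n) : rep b (n + 1) = b :: rep b n := by
  rw [rep, Int.toNat_add hn one_pos.le, Int.toNat_one, List.replicate_succ, rep]

theorem rep_append_rep (b : α) {m n : ℤ} (hm : 0 ≤ m) (hn : 0 ≤ n) :
    rep b m ++ rep b n = rep b (m + n) := by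
  rw [rep, rep, rep, List.replicate_append_replicate, Int.toNat_add hm hn]

theorem rep_append_comm (b : α) (m n : ℤ) : rep b m ++ rep b n = rep b n ++ rep b m := by
  rw [rep, rep, List.replicate_append_replicate, List.replicate_append_replicate, add_comm]

theorem rep_natCast_sub (b : α) (m n : ℕ) : rep b ((m : ℤ) - n) = rep b ((m - n : ℕ) : ℤ) := by
  rw [rep, rep, Int.toNat_sub, Int.toNat_natCast]

theorem isPrefix_rep_iff {b : α} {n : ℤ} {w : ℕ → α} :
    IsPrefix (rep b n) w ↔ ∀ i : ℕ, (i : ℤ) < n → w i = b := by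
  simp [IsPrefix, rep, eq_comm]

theorem tendsto_length_of_eventually_lt {W : ℕ → List α}
    (h : ∀ᶠ j in atTop, (W j).length < (W (j + 1)).length) :
    Tendsto (fun j => (W j).length) atTop atTop := by
  obtain ⟨N, hN⟩ := eventually_atTop.1 h
  refine (tendsto_add_atTop_iff_nat N).1 (StrictMono.tendsto_atTop (strictMono_nat_of_lt_succ ?_))
  intro j
  have := hN (j + N) (Nat.le_add_left N j)
  rwa [Nat.add_right_comm] at this

theorem eq_of_eventually_append_eq {X Y A B : ℕ → List α} {w w' : ℕ → α}
    (hX : ∀ᶠ j in atTop, IsPrefix (X j) w) (hY : ∀ᶠ j in atTop, IsPrefix (Y j) w')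
    (h : ∀ᶠ j in atTop, X j ++ A j = Y j ++ B j)
    (hXlen : Tendsto (fun j => (X j).length) atTop atTop)
    (hYlen : Tendsto (fun j => (Y j).length) atTop atTop) : w = w' := by
  funext n
  obtain ⟨j, hXj, hYj, hj, hXn, hYn⟩ := (hX.and (hY.and (h.and
    ((hXlen.eventually_gt_atTop n).and (hYlen.eventually_gt_atTop n))))).exists
  exact hXj.apply_eq_of_append_eq hYj hj hXn hYn

end Words

section RunScan

variable {α : Type*}

/-- The state of a left-to-right scan of a word which removes `k` letters from each of its maximal
runs: the letter and the full length of the run being read, and the trimmed runs before it. -/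
structure RunScan (α : Type*) where
  letter : α
  length : ℤ
  closed : List α

namespace RunScan

/-- The word read so far with every run trimmed by `k` letters, including the current one. -/
def word (k : ℤ) (S : RunScan α) : List α := S.closed ++ rep S.letter (S.length - k)

variable [DecidableEq α]

/-- The scan reads one more letter. -/
def push (k : ℤ) (S : RunScan α) (b : α) : RunScan α :=
  if b = S.letter then ⟨b, S.length + 1, S.closed⟩ else ⟨b, 1, S.word k⟩

/-- The scan reads one more word. -/
def feed (k : ℤ) (S : RunScan α) (X : List α) : RunScan α := X.foldl (push k) S

theorem feed_append (k : ℤ) (S : RunScan α) (X Y : List α) :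
    S.feed k (X ++ Y) = (S.feed k X).feed k Y := List.foldl_append

theorem feed_rep_letter (k : ℤ) (S : RunScan α) {n : ℤ} (hn : 0 ≤ n) :
    S.feed k (rep S.letter n) = ⟨S.letter, S.length + n, S.closed⟩ := by
  induction n, hn using Int.leInduction generalizing S with
  | base => simp [feed]
  | succ n hn ih =>
    have hpush : S.push k S.letter = ⟨S.letter, S.length + 1, S.closed⟩ := if_pos rfl
    have h := ih ⟨S.letter, S.length + 1, S.closed⟩
    rw [rep_add_one _ hn, feed, List.foldl_cons, hpush, ← feed, h, add_assoc, add_comm 1]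

theorem feed_rep_of_ne (k : ℤ) {S : RunScan α} {b : α} (hb : b ≠ S.letter) {n : ℤ}
    (hn : 0 < n) : S.feed k (rep b n) = ⟨b, n, S.word k⟩ := by
  have hpush : S.push k b = ⟨b, 1, S.word k⟩ := if_neg hb
  have h := feed_rep_letter k ⟨b, 1, S.word k⟩ (Int.le_sub_one_of_lt hn)
  rw [← sub_add_cancel n 1, rep_add_one _ (Int.le_sub_one_of_lt hn), feed, List.foldl_cons,
    hpush, ← feed, h, add_comm]

theorem word_feed_rep_letter (k : ℤ) {k' : ℤ} {S : RunScan α} (hk : k' ≤ S.length) {n : ℤ}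
    (hn : 0 ≤ n) : (S.feed k (rep S.letter n)).word k' = S.word k' ++ rep S.letter n := by
  rw [feed_rep_letter k S hn, word, word, List.append_assoc,
    rep_append_rep _ (sub_nonneg.2 hk) hn, sub_add_eq_add_sub]

end RunScan

/-- The finite word `0^{s 1}1^{t 1}⋯0^{s m}1^{t m}`. -/
def runsWord (s t : ℕ → ℕ) : ℕ → List ℤ
  | 0 => []
  | m + 1 => runsWord s t m ++ (rep 0 (s (m + 1)) ++ rep 1 (t (m + 1)))

theorem length_runsWord (s t : ℕ → ℕ) (m : ℕ) :
    (runsWord s t m).length = ∑ k ∈ Finset.Icc 1 m, (s k + t k) := by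
  induction m with
  | zero => simp [runsWord]
  | succ m ih => simp [runsWord, Finset.sum_Icc_succ_top, ih]

theorem length_runsWord_mono (s t : ℕ → ℕ) : Monotone fun m => (runsWord s t m).length :=
  monotone_nat_of_le_succ fun m => by simp [runsWord]

theorem runSeq_eq_one {N m n : ℕ} {s t : ℕ → ℕ} (hm : m < N)
    (h₁ : (runsWord s t m).length + s (m + 1) ≤ n) (h₂ : n < (runsWord s t (m + 1)).length) :
    runSeq N s t n = 1 := by
  rw [length_runsWord] at h₁ h₂
  exact if_pos ⟨m + 1, by omega, hm, h₁, h₂⟩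

theorem runSeq_eq_zero {N m n : ℕ} {s t : ℕ → ℕ} (h₁ : (runsWord s t m).length ≤ n)
    (h₂ : n < (runsWord s t m).length + s (m + 1) ∨ N ≤ m) : runSeq N s t n = 0 := by
  refine if_neg ?_
  rintro ⟨q, hq, hqN, hlo, hhi⟩
  obtain ⟨p, rfl⟩ := Nat.exists_eq_add_of_le' hq
  rw [← length_runsWord] at hlo hhi
  rcases lt_trichotomy p m with hpm | rfl | hmp
  · have := length_runsWord_mono s t (show p + 1 ≤ m by omega)
    dsimp only at this
    omega
  · simp only [Nat.add_sub_cancel] at hlo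
    omega
  · have := length_runsWord_mono s t (show m + 1 ≤ p by omega)
    simp only [runsWord, List.length_append, length_rep, Nat.add_sub_cancel] at this hlo
    omega

theorem isPrefix_runsWord {N m : ℕ} (s t : ℕ → ℕ) (hm : m ≤ N) :
    IsPrefix (runsWord s t m) (runSeq N s t) := by
  induction m with
  | zero => exact isPrefix_nil _
  | succ m ih =>
    rw [runsWord, isPrefix_append_iff, isPrefix_append_iff, isPrefix_rep_iff, isPrefix_rep_iff]
    refine ⟨ih (by omega), fun i hi => ?_, fun i hi => ?_⟩
    · exact runSeq_eq_zero (m := m) (by omega) (by omega)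
    · apply runSeq_eq_one hm <;>
        simp only [runsWord, List.length_append, length_rep] <;> omega

theorem isPrefix_runsWord_append_rep (N : ℕ) (s t : ℕ → ℕ) (z : ℤ) :
    IsPrefix (runsWord s t N ++ rep 0 z) (runSeq N s t) := by
  rw [isPrefix_append_iff, isPrefix_rep_iff]
  exact ⟨isPrefix_runsWord s t le_rfl,
    fun i _ => runSeq_eq_zero (m := N) (by omega) (Or.inr le_rfl)⟩

end RunScan

section Path

variable {L : ℤ} {η : ℕ → ℤ}

/-- `η_{j-1}` with the convention `η_{-1} = 0`. -/
def prev (η : ℕ → ℤ) : ℕ → ℤ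
  | 0 => 0
  | j + 1 => η j

/-- The increment `η_{j-1} + η_j - L` whose sign determines the soliton flag `a_j`. -/
def inc (L : ℤ) (η : ℕ → ℤ) (j : ℕ) : ℤ := prev η j + η j - L

theorem flag_succ (j : ℕ) : flag L η (j + 1) =
    if inc L η (j + 1) < 0 then 0 else if inc L η (j + 1) = 0 then flag L η j else 1 := by
  simp only [flag, inc, prev]
  split_ifs <;> first | rfl | omega

theorem flag_succ_of_inc_neg {j : ℕ} (h : inc L η (j + 1) < 0) : flag L η (j + 1) = 0 := by
  rw [flag_succ, if_pos h]

theorem flag_succ_of_inc_eq_zero {j : ℕ} (h : inc L η (j + 1) = 0) :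
    flag L η (j + 1) = flag L η j := by
  rw [flag_succ, if_neg h.not_lt, if_pos h]

theorem flag_succ_of_inc_pos {j : ℕ} (h : 0 < inc L η (j + 1)) : flag L η (j + 1) = 1 := by
  rw [flag_succ, if_neg h.not_gt, if_neg h.ne']

theorem flag_eq_zero_or_one (L : ℤ) (η : ℕ → ℤ) (j : ℕ) : flag L η j = 0 ∨ flag L η j = 1 := by
  induction j with
  | zero => exact Or.inl rfl
  | succ j ih => rw [flag_succ]; split_ifs <;> simp [ih]

theorem inc_succ_nonpos {j : ℕ} (h : flag L η (j + 1) = 0) : inc L η (j + 1) ≤ 0 := by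
  rw [flag_succ] at h; split_ifs at h <;> omega

theorem inc_nonpos_of_flag_eq_zero (h0 : η 0 ≤ L) {j : ℕ} (h : flag L η j = 0) :
    inc L η j ≤ 0 := by
  cases j with
  | zero => simpa [inc, prev] using h0
  | succ j => exact inc_succ_nonpos h

theorem inc_nonneg_of_flag_eq_one {j : ℕ} (h : flag L η j = 1) : 0 ≤ inc L η j := by
  cases j with
  | zero => exact absurd h zero_ne_one
  | succ j => rw [flag_succ] at h; split_ifs at h <;> omega

theorem inc_succ_pos {j : ℕ} (h : flag L η j = 0) (h' : flag L η (j + 1) = 1) :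
    0 < inc L η (j + 1) := by
  rw [flag_succ] at h'; split_ifs at h' <;> omega

theorem inc_succ_neg {j : ℕ} (h : j ∈ Iset L η) : inc L η (j + 1) < 0 := by
  have ⟨h, h'⟩ := h
  rw [flag_succ] at h'; split_ifs at h' <;> omega

/-- The indices at which the soliton flag rises from `0` to `1`. -/
def riseSet (L : ℤ) (η : ℕ → ℤ) : Set ℕ := {j | flag L η j = 0 ∧ flag L η (j + 1) = 1}

end Path

section Carrier

variable {L : ℤ} {η : ℕ → ℤ}

/-- The part of the carrier load in front of box `j` which was not just picked up from
box `j - 1`. -/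
def excess (L : ℤ) (η : ℕ → ℤ) (j : ℕ) : ℤ := carrier L η j - prev η j

theorem excess_zero (L : ℤ) (η : ℕ → ℤ) : excess L η 0 = 0 := rfl

theorem excess_succ (j : ℕ) : excess L η (j + 1) = max 0 (inc L η j + excess L η j) := by
  simp only [excess, inc, carrier, carrierM, prev]
  ring_nf

theorem excess_nonneg (L : ℤ) (η : ℕ → ℤ) : ∀ j, 0 ≤ excess L η j
  | 0 => le_rfl
  | j + 1 => by rw [excess_succ]; exact le_max_left _ _

/-- The free space of box `j` left unused by `T_L`. -/
def idle (L : ℤ) (η : ℕ → ℤ) (j : ℕ) : ℤ := max 0 (-(inc L η j + excess L η j))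

/-- The part of the excess load dropped into box `j`. -/
def unload (L : ℤ) (η : ℕ → ℤ) (j : ℕ) : ℤ := min (max 0 (-inc L η j)) (excess L η j)

theorem idle_nonneg (L : ℤ) (η : ℕ → ℤ) (j : ℕ) : 0 ≤ idle L η j := le_max_left _ _

theorem unload_nonneg (L : ℤ) (η : ℕ → ℤ) (j : ℕ) : 0 ≤ unload L η j :=
  le_min (le_max_left _ _) (excess_nonneg L η j)

theorem unload_add_idle (L : ℤ) (η : ℕ → ℤ) (j : ℕ) :
    unload L η j + idle L η j = max 0 (-inc L η j) := by
  have := excess_nonneg L η j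
  simp only [unload, idle]
  omega

theorem evol_eq_sub_idle (L : ℤ) (η : ℕ → ℤ) (j : ℕ) :
    evol L η j = L - η j - idle L η j := by
  simp only [evol, idle, inc, excess]
  omega

theorem evol_eq_prev_add (L : ℤ) (η : ℕ → ℤ) (j : ℕ) :
    evol L η j = prev η j + excess L η j - excess L η (j + 1) := by
  rw [evol_eq_sub_idle, excess_succ, idle, inc]
  omega

theorem evol_zero (h0 : η 0 ≤ L) : evol L η 0 = 0 := by
  simp [evol, carrier, carrierM, h0]

theorem inc_evol_succ (L : ℤ) (η : ℕ → ℤ) (j : ℕ) : inc L (evol L η) (j + 1) =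
    unload L η (j + 1) - (idle L η j + max 0 (inc L η (j + 1))) := by
  have h := evol_eq_sub_idle L η j
  have h' := evol_eq_prev_add L η (j + 1)
  have hs := excess_succ (L := L) (η := η) (j + 1)
  have hu := unload_add_idle L η (j + 1)
  simp only [idle, prev, inc] at h h' hs hu ⊢
  omega

/-- The increment of `T_L η` is a difference of which one part vanishes: an idle box empties the
carrier. -/
theorem unload_succ_eq_zero_or (L : ℤ) (η : ℕ → ℤ) (j : ℕ) :
    unload L η (j + 1) = 0 ∨ idle L η j + max 0 (inc L η (j + 1)) = 0 := by
  have := excess_nonneg L η (j + 1)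
  have := excess_succ (L := L) (η := η) j
  simp only [unload, idle]
  omega

theorem unload_eq_zero_of_flag_evol_eq_zero {j : ℕ} (h : flag L (evol L η) j = 0) :
    unload L η j = 0 := by
  cases j with
  | zero => simp [unload, excess_zero]
  | succ j =>
    have := inc_succ_nonpos h
    have := inc_evol_succ L η j
    have := unload_succ_eq_zero_or L η j
    have := unload_nonneg L η (j + 1)
    omega

theorem idle_eq_zero_of_flag_evol_succ_eq_one {j : ℕ} (h : flag L (evol L η) (j + 1) = 1) :
    idle L η j = 0 ∧ inc L η (j + 1) ≤ 0 := by
  have := inc_nonneg_of_flag_eq_one h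
  have := inc_evol_succ L η j
  have := unload_succ_eq_zero_or L η j
  have := idle_nonneg L η j
  omega

theorem flag_evol_of_flag (h0 : η 0 ≤ L) (j : ℕ) :
    (flag L η j = 1 → 0 < excess L η (j + 1) ∧ flag L (evol L η) j = 0) ∧
    (flag L η j = 0 → 0 < excess L η (j + 1) → flag L (evol L η) j = 1) := by
  induction j with
  | zero =>
    refine ⟨fun h => absurd h zero_ne_one, fun _ h => ?_⟩
    simp only [excess_succ, excess_zero, inc, prev] at h
    omega
  | succ j ih =>
    have hθ := inc_evol_succ L η j
    have he := excess_succ (L := L) (η := η) (j + 1)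
    have he' := excess_succ (L := L) (η := η) j
    have := excess_nonneg L η (j + 1)
    simp only [idle, unload] at hθ
    rcases lt_trichotomy (inc L η (j + 1)) 0 with hj | hj | hj
    · rw [flag_succ_of_inc_neg hj]
      exact ⟨fun h => absurd h zero_ne_one, fun _ h => flag_succ_of_inc_pos (by omega)⟩
    · have hload : excess L η (j + 1 + 1) = excess L η (j + 1) := by omega
      have hkeep (h : 0 < excess L η (j + 1)) :
          flag L (evol L η) (j + 1) = flag L (evol L η) j :=
        flag_succ_of_inc_eq_zero (by omega)
      rw [flag_succ_of_inc_eq_zero hj, hload]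
      exact ⟨fun h => (ih.1 h).imp_right fun h' => (hkeep (ih.1 h).1).trans h',
        fun h h' => (hkeep h').trans (ih.2 h h')⟩
    · rw [flag_succ_of_inc_pos hj]
      exact ⟨fun _ => ⟨by omega, flag_succ_of_inc_neg (by omega)⟩,
        fun h => absurd h one_ne_zero⟩

theorem Iset_eq_riseSet_evol (h0 : η 0 ≤ L) : Iset L η = riseSet L (evol L η) := by
  ext j
  have hθ := inc_evol_succ L η j
  have := unload_add_idle L η (j + 1)
  obtain ⟨h1, h2⟩ := flag_evol_of_flag h0 j
  constructor
  · intro hj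
    have hneg := inc_succ_neg hj
    obtain ⟨hpos, hflag⟩ := h1 hj.1
    have : 0 < inc L (evol L η) (j + 1) := by
      have := excess_succ (L := L) (η := η) j
      simp only [idle, unload] at hθ
      omega
    exact ⟨hflag, flag_succ_of_inc_pos this⟩
  · rintro ⟨hj, hj'⟩
    have hpos := inc_succ_pos hj hj'
    obtain ⟨hidle, -⟩ := idle_eq_zero_of_flag_evol_succ_eq_one hj'
    have hneg : inc L η (j + 1) < 0 ∧ 0 < excess L η (j + 1) := by
      simp only [unload] at hθ
      omega
    refine ⟨(flag_eq_zero_or_one L η j).resolve_left fun h => ?_, ?_⟩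
    · exact zero_ne_one (hj.symm.trans (h2 h hneg.2))
    · exact flag_succ_of_inc_neg hneg.1

end Carrier

section PathWords

variable {L K : ℤ} {η : ℕ → ℤ}

/-- The run contributed by box `j`: `|inc_j|` copies of the flag, i.e. `0^{x⁻}1^{x⁺}` with
`x = inc_j`. -/
def stepWord (L : ℤ) (η : ℕ → ℤ) (j : ℕ) : List ℤ := rep (flag L η j) |inc L η j|

theorem stepWord_of_flag_eq_zero (h0 : η 0 ≤ L) {j : ℕ} (h : flag L η j = 0) :
    stepWord L η j = rep 0 (-inc L η j) := by
  rw [stepWord, h, abs_of_nonpos (inc_nonpos_of_flag_eq_zero h0 h)]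

theorem stepWord_of_flag_eq_one {j : ℕ} (h : flag L η j = 1) :
    stepWord L η j = rep 1 (inc L η j) := by
  rw [stepWord, h, abs_of_nonneg (inc_nonneg_of_flag_eq_one h)]

theorem rep_max_append_rep_max_eq_stepWord (h0 : η 0 ≤ L) (j : ℕ) :
    rep 1 (max 0 (inc L η j)) ++ rep 0 (max 0 (-inc L η j)) = stepWord L η j := by
  rcases flag_eq_zero_or_one L η j with h | h
  · have hx := inc_nonpos_of_flag_eq_zero h0 h
    rw [stepWord_of_flag_eq_zero h0 h, max_eq_left hx, max_eq_right (neg_nonneg.2 hx)]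
    rfl
  · have hx := inc_nonneg_of_flag_eq_one h
    rw [stepWord_of_flag_eq_one h, max_eq_right hx, max_eq_left (neg_nonpos.2 hx), rep_zero,
      List.append_nil]

open scoped Classical in
/-- The path of `η` up to box `j`, heightened by `1^K 0^K` at each of its peaks, which are the
boxes in `I(η)`. -/
noncomputable def peakWord (K L : ℤ) (η : ℕ → ℤ) : ℕ → List ℤ
  | 0 => stepWord L η 0
  | j + 1 => peakWord K L η j ++
      ((if j ∈ Iset L η then rep 1 K ++ rep 0 K else []) ++ stepWord L η (j + 1))

open scoped Classical in
/-- The path of `η` up to box `j`, deepened by `0^K 1^K` at each of its valleys. -/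
noncomputable def valleyWord (K L : ℤ) (η : ℕ → ℤ) : ℕ → List ℤ
  | 0 => stepWord L η 0
  | j + 1 => valleyWord K L η j ++
      ((if j ∈ riseSet L η then rep 0 K ++ rep 1 K else []) ++ stepWord L η (j + 1))

/-- Moving every `0^K` inserted after a peak to the right end of the preceding run of `0`s turns
heightened peaks into deepened valleys. -/
theorem rep_zero_append_peakWord (K L : ℤ) (η : ℕ → ℤ) (j : ℕ) :
    (flag L η j = 0 → rep 0 K ++ peakWord K L η j = valleyWord K L η j ++ rep 0 K) ∧
    (flag L η j = 1 → rep 0 K ++ peakWord K L η j ++ rep 1 K = valleyWord K L η j) := by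
  induction j with
  | zero =>
    exact ⟨fun _ => rep_append_comm 0 _ _, fun h => absurd h zero_ne_one⟩
  | succ j ih =>
    obtain ⟨ih0, ih1⟩ := ih
    rcases flag_eq_zero_or_one L η j with h | h <;>
      rcases flag_eq_zero_or_one L η (j + 1) with h' | h' <;>
      simp only [h, h', peakWord, valleyWord, stepWord, Iset, riseSet, Set.mem_ofPred_eq,
        zero_ne_one, one_ne_zero, and_self, and_true, true_and, and_false, if_true, if_false,
        false_imp_iff, true_imp_iff, List.nil_append, ← List.append_assoc] at ih0 ih1 ⊢
    · rw [ih0, List.append_assoc, rep_append_comm, List.append_assoc]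
    · rw [ih0]
      simp only [List.append_assoc, rep_append_comm (1 : ℤ) |inc L η (j + 1)| K]
    · rw [ih1, List.append_assoc, rep_append_comm, List.append_assoc]
    · rw [← ih1]
      simp only [List.append_assoc, rep_append_comm (1 : ℤ) |inc L η (j + 1)| K]

end PathWords

section CapacityOne

/-- The carrier load after `T_1` with initial load `v` has passed the word `X`. -/
def loadAfter (v : ℤ) : List ℤ → ℤ
  | [] => v
  | a :: X => loadAfter (a + max 0 (a + v - 1)) X

/-- The word written by `T_1` with initial load `v` while passing the word `X`. -/
def output (v : ℤ) : List ℤ → List ℤ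
  | [] => []
  | a :: X => min (1 - a) v :: output (a + max 0 (a + v - 1)) X

theorem loadAfter_append (v : ℤ) (X Y : List ℤ) :
    loadAfter v (X ++ Y) = loadAfter (loadAfter v X) Y := by
  induction X generalizing v with
  | nil => rfl
  | cons _ _ ih => exact ih _

theorem output_append (v : ℤ) (X Y : List ℤ) :
    output v (X ++ Y) = output v X ++ output (loadAfter v X) Y := by
  induction X generalizing v with
  | nil => rfl
  | cons a X ih => exact congrArg (List.cons _) (ih _)

theorem length_output (v : ℤ) (X : List ℤ) : (output v X).length = X.length := by
  induction X generalizing v with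
  | nil => rfl
  | cons a X ih => exact congrArg (· + 1) (ih _)

theorem carrierM_succ_eq_shift (L m : ℤ) (w : ℕ → ℤ) (j : ℕ) : carrierM L m w (j + 1) =
    carrierM L (w 0 + max 0 (w 0 + m - L)) (fun i => w (i + 1)) j := by
  induction j with
  | zero => rfl
  | succ j ih => rw [carrierM, ih, carrierM]

protected theorem IsPrefix.output {X : List ℤ} {w : ℕ → ℤ} (h : IsPrefix X w) (m : ℤ) :
    IsPrefix (output m X) (evolOne m w) := by
  induction X generalizing w m with
  | nil => exact isPrefix_nil _
  | cons a X ih =>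
    obtain ⟨rfl, hX⟩ := isPrefix_cons_iff.1 h
    refine isPrefix_cons_iff.2 ⟨rfl, ?_⟩
    simp only [evolOne, carrierM_succ_eq_shift]
    exact ih hX _

variable {v n : ℤ}

theorem loadAfter_rep_one (hv : 0 ≤ v) (hn : 0 ≤ n) : loadAfter v (rep 1 n) = v + n := by
  induction n, hn using Int.leInduction generalizing v with
  | base => simp [loadAfter]
  | succ n hn ih => rw [rep_add_one 1 hn, loadAfter, ih] <;> omega

theorem output_rep_one (hv : 0 ≤ v) (hn : 0 ≤ n) : output v (rep 1 n) = rep 0 n := by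
  induction n, hn using Int.leInduction generalizing v with
  | base => rfl
  | succ n hn ih =>
    rw [rep_add_one 1 hn, rep_add_one 0 hn, output, ih (by omega), sub_self, min_eq_left hv]

theorem loadAfter_rep_zero (hv : 0 ≤ v) (hn : 0 ≤ n) :
    loadAfter v (rep 0 n) = max 0 (v - n) := by
  induction n, hn using Int.leInduction generalizing v with
  | base => simp [loadAfter, hv]
  | succ n hn ih => rw [rep_add_one 0 hn, loadAfter, ih] <;> omega

theorem output_rep_zero (hv : 0 ≤ v) (hn : 0 ≤ n) :
    output v (rep 0 n) = rep 1 (min n v) ++ rep 0 (max 0 (n - v)) := by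
  induction n, hn using Int.leInduction generalizing v with
  | base => simp [output, hv]
  | succ n hn ih =>
    rw [rep_add_one 0 hn, output, ih (by omega)]
    rcases hv.eq_or_lt with rfl | hv
    · simp [hn, Int.add_nonneg hn, rep_add_one]
    · rw [show min (n + 1) v = min n (v - 1) + 1 by omega, rep_add_one 1 (by omega),
        min_eq_left (by omega : 1 - 0 ≤ v), show 0 + max 0 (0 + v - 1) = v - 1 by omega,
        show n + 1 - v = n - (v - 1) by omega]
      rfl

theorem loadAfter_peak (hv : 0 ≤ v) (hn : 0 ≤ n) : loadAfter v (rep 1 n ++ rep 0 n) = v := by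
  rw [loadAfter_append, loadAfter_rep_one hv hn, loadAfter_rep_zero (by omega) hn]
  omega

theorem output_peak (hv : 0 ≤ v) (hn : 0 ≤ n) :
    output v (rep 1 n ++ rep 0 n) = rep 0 n ++ rep 1 n := by
  rw [output_append, output_rep_one hv hn, loadAfter_rep_one hv hn,
    output_rep_zero (by omega) hn, min_eq_left (by omega), max_eq_left (by omega), rep_zero,
    List.append_nil]

end CapacityOne

section LinearizedSolitons

variable {L K : ℤ} {η : ℕ → ℤ}

theorem loadAfter_stepWord (h0 : η 0 ≤ L) (j : ℕ) :
    loadAfter (excess L η j) (stepWord L η j) = excess L η (j + 1) := by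
  have hv := excess_nonneg L η j
  rw [excess_succ]
  rcases flag_eq_zero_or_one L η j with h | h
  · have hx := inc_nonpos_of_flag_eq_zero h0 h
    rw [stepWord_of_flag_eq_zero h0 h, loadAfter_rep_zero hv (by omega)]
    omega
  · have hx := inc_nonneg_of_flag_eq_one h
    rw [stepWord_of_flag_eq_one h, loadAfter_rep_one hv hx]
    omega

theorem output_stepWord (h0 : η 0 ≤ L) (j : ℕ) :
    output (excess L η j) (stepWord L η j) =
      rep 1 (unload L η j) ++ (rep 0 (max 0 (inc L η j)) ++ rep 0 (idle L η j)) := by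
  have hv := excess_nonneg L η j
  rcases flag_eq_zero_or_one L η j with h | h
  · have hx := inc_nonpos_of_flag_eq_zero h0 h
    rw [stepWord_of_flag_eq_zero h0 h, output_rep_zero hv (by omega), unload, idle,
      max_eq_left hx, max_eq_right (neg_nonneg.2 hx), neg_add']
    rfl
  · have hx := inc_nonneg_of_flag_eq_one h
    rw [stepWord_of_flag_eq_one h, output_rep_one hv hx, unload, idle, max_eq_right hx,
      max_eq_left (neg_nonpos.2 hx), min_eq_left hv, max_eq_left (by omega)]
    simp

theorem loadAfter_peakWord (hK : 0 ≤ K) (h0 : η 0 ≤ L) (j : ℕ) :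
    loadAfter 0 (peakWord K L η j) = excess L η (j + 1) := by
  induction j with
  | zero => exact loadAfter_stepWord h0 0
  | succ j ih =>
    rw [peakWord, loadAfter_append, loadAfter_append, ih, ← loadAfter_stepWord h0 (j + 1)]
    split_ifs
    · rw [loadAfter_peak (excess_nonneg L η _) hK]
    · rfl

open scoped Classical in
theorem output_peakWord_succ (hK : 0 ≤ K) (h0 : η 0 ≤ L) (j : ℕ) :
    output 0 (peakWord K L η (j + 1)) = output 0 (peakWord K L η j) ++
      ((if j ∈ riseSet L (evol L η) then rep 0 K ++ rep 1 K else []) ++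
        output (excess L η (j + 1)) (stepWord L η (j + 1))) := by
  have hv := excess_nonneg L η (j + 1)
  rw [peakWord, output_append, output_append, loadAfter_peakWord hK h0, Iset_eq_riseSet_evol h0]
  split_ifs
  · rw [loadAfter_peak hv hK, output_peak hv hK]
  · rfl

theorem rep_zero_append_output_peakWord (hL : 0 ≤ L) (hK : 0 ≤ K) (h0 : η 0 ≤ L) (j : ℕ) :
    rep 0 L ++ output 0 (peakWord K L η j) =
      valleyWord K L (evol L η) j ++ rep 0 (idle L η j) := by
  have hθ0 : evol L η 0 ≤ L := (evol_zero h0).trans_le hL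
  induction j with
  | zero =>
    have hv : valleyWord K L (evol L η) 0 = rep 0 L := by
      rw [valleyWord, stepWord_of_flag_eq_zero hθ0 rfl]
      simp [inc, prev, evol_zero h0]
    have ho := output_stepWord h0 0
    rw [excess_zero] at ho
    rw [hv, peakWord, ho]
    simp [unload, excess_zero, inc, prev, h0]
  | succ j ih =>
    have hθ := inc_evol_succ L η j
    rw [output_peakWord_succ hK h0, ← List.append_assoc, ih, valleyWord, output_stepWord h0]
    rcases flag_eq_zero_or_one L (evol L η) (j + 1) with h | h
    · have hj : j ∉ riseSet L (evol L η) := fun hj => zero_ne_one (h.symm.trans hj.2)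
      rw [unload_eq_zero_of_flag_evol_eq_zero h, zero_sub] at hθ
      rw [stepWord_of_flag_eq_zero hθ0 h, if_neg hj, hθ, neg_neg,
        unload_eq_zero_of_flag_evol_eq_zero h,
        ← rep_append_rep 0 (idle_nonneg L η j) (le_max_left _ _)]
      simp
    · obtain ⟨hi, hx⟩ := idle_eq_zero_of_flag_evol_succ_eq_one h
      rw [stepWord_of_flag_eq_one h, hθ, hi, max_eq_left hx]
      simp

theorem output_peakWord_append (hL : 0 ≤ L) (h0 : η 0 ≤ L) {j : ℕ}
    (h : flag L (evol L η) j = 0) :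
    output 0 (peakWord L L η j) ++ rep 0 L =
      peakWord L L (evol L η) j ++ rep 0 (idle L η j) := by
  refine List.append_cancel_left (as := rep 0 L) ?_
  rw [← List.append_assoc, rep_zero_append_output_peakWord hL hL h0, List.append_assoc,
    rep_append_comm, ← List.append_assoc, ← (rep_zero_append_peakWord L L _ j).1 h,
    List.append_assoc]

end LinearizedSolitons

section Boxes

variable {L M : ℕ} {η : ℕ → ℤ}

/-- The properties of a state in `S_{L,M}` on which the linearization rests. -/
structure BoundedState (L M : ℕ) (η : ℕ → ℤ) : Prop where
  neg_le : ∀ j, -(M : ℤ) ≤ η j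
  le_add : ∀ j, η j ≤ L + M
  zero_le : η 0 ≤ L
  eventually_eq_zero : ∀ᶠ j in atTop, η j = 0

open scoped Classical in
/-- The word contributed by box `j` to `d̃(η)`. -/
noncomputable def boxWord (L M : ℕ) (η : ℕ → ℤ) (j : ℕ) : List ℤ :=
  if j ∈ Iset L η then rep 1 (η j + M) ++ rep 0 ((L : ℤ) + 2 * M - (η j + M))
  else rep 0 ((L : ℤ) + 2 * M - (η j + M) - bprev L M η j) ++ rep 1 (η j + M - btilde L M η j)

/-- The part of `d̃(η)` contributed by the boxes before box `j`. -/
noncomputable def boxesWord (L M : ℕ) (η : ℕ → ℤ) : ℕ → List ℤ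
  | 0 => []
  | j + 1 => boxesWord L M η j ++ boxWord L M η j

theorem BoundedState.btilde_le (hη : BoundedState L M η) (j : ℕ) :
    btilde L M η j ≤ η j + M := by
  have := hη.neg_le j
  unfold btilde
  split_ifs <;> omega

theorem BoundedState.bprev_le (hη : BoundedState L M η) (j : ℕ) :
    bprev L M η j ≤ L + 2 * M - (η j + M) := by
  have := hη.le_add j
  cases j with
  | zero => simp only [bprev]; omega
  | succ j => simp only [bprev, btilde]; split_ifs <;> omega

theorem BoundedState.length_boxWord (hη : BoundedState L M η) (j : ℕ) :
    (boxWord L M η j).length = wordLen L M η j := by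
  have := hη.neg_le j
  have := hη.le_add j
  have := hη.btilde_le j
  have := hη.bprev_le j
  unfold boxWord wordLen
  split_ifs <;> simp only [List.length_append, length_rep] <;> omega

theorem wordStart_succ (j : ℕ) :
    wordStart L M η (j + 1) = wordStart L M η j + wordLen L M η j :=
  Finset.sum_range_succ _ _

theorem BoundedState.length_boxesWord (hη : BoundedState L M η) (j : ℕ) :
    (boxesWord L M η j).length = wordStart L M η j := by
  induction j with
  | zero => rfl
  | succ j ih => rw [boxesWord, List.length_append, ih, hη.length_boxWord, wordStart_succ]

theorem wordStart_mono (L M : ℕ) (η : ℕ → ℤ) : Monotone (wordStart L M η) :=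
  monotone_nat_of_le_succ fun j => by rw [wordStart_succ]; exact Nat.le_add_right _ _

open scoped Classical in
theorem dTilde_wordStart_add {j k : ℕ} (hk : k < wordLen L M η j) :
    dTilde L M η (wordStart L M η j + k) =
      if (j ∈ Iset L η ∧ (k : ℤ) < η j + M) ∨
        (j ∉ Iset L η ∧ (L : ℤ) + 2 * M - (η j + M) - bprev L M η j ≤ k) then 1 else 0 := by
  have hs := wordStart_succ (L := L) (M := M) (η := η) j
  unfold dTilde
  refine if_congr ⟨?_, fun h => ⟨j, by omega, by omega, by simpa using h⟩⟩ rfl rfl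
  rintro ⟨i, h₁, h₂, h₃⟩
  obtain rfl : i = j := by
    rcases lt_trichotomy i j with h | h | h
    · have := wordStart_mono L M η (show i + 1 ≤ j from h); omega
    · exact h
    · have := wordStart_mono L M η (show j + 1 ≤ i from h); omega
  simpa using h₃

theorem BoundedState.isPrefix_boxWord (hη : BoundedState L M η) (j : ℕ) :
    IsPrefix (boxWord L M η j) (fun i => dTilde L M η (wordStart L M η j + i)) := by
  have hlen := hη.length_boxWord j
  have := hη.neg_le j
  have := hη.bprev_le j
  by_cases hI : j ∈ Iset L η <;>
    simp only [boxWord, hI, if_true, if_false, List.length_append, length_rep,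
      isPrefix_append_iff, isPrefix_rep_iff] at hlen ⊢ <;>
    refine ⟨fun i hi => ?_, fun i hi => ?_⟩ <;>
    rw [dTilde_wordStart_add (by omega)] <;>
    simp only [hI, true_and, false_and, not_true_eq_false, not_false_eq_true, or_false, false_or]
  · exact if_pos hi
  · exact if_neg (by omega)
  · exact if_neg (by omega)
  · exact if_pos (by omega)

theorem BoundedState.isPrefix_boxesWord (hη : BoundedState L M η) (j : ℕ) :
    IsPrefix (boxesWord L M η j) (dTilde L M η) := by
  induction j with
  | zero => exact isPrefix_nil _
  | succ j ih =>
    rw [boxesWord, isPrefix_append_iff, hη.length_boxesWord]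
    exact ⟨ih, hη.isPrefix_boxWord j⟩

open scoped Classical in
/-- The part of the words of the boxes up to `j` which belongs to the steps of the path
after `j`. -/
noncomputable def overhang (L M : ℕ) (η : ℕ → ℤ) (j : ℕ) : List ℤ :=
  if j ∈ Iset L η then rep 1 (L + 2 * M) ++ rep 0 ((L : ℤ) + 2 * M - (η j + M))
  else rep 1 (η j + M - btilde L M η j)

open scoped Classical in
theorem BoundedState.overhang_append_boxWord (hη : BoundedState L M η) (j : ℕ) :
    overhang L M η j ++ boxWord L M η (j + 1) =
      (if j ∈ Iset L η then rep 1 ((L : ℤ) + 2 * M) ++ rep 0 ((L : ℤ) + 2 * M) else []) ++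
        (stepWord L η (j + 1) ++ overhang L M η (j + 1)) := by
  have := hη.neg_le j
  have := hη.neg_le (j + 1)
  have := hη.le_add j
  have := hη.le_add (j + 1)
  have hinc : inc L η (j + 1) = η j + η (j + 1) - L := rfl
  by_cases hj : j ∈ Iset L η
  · have hj' : j + 1 ∉ Iset L η := fun h => zero_ne_one (hj.2.symm.trans h.1)
    have hx := inc_succ_neg hj
    have hb : btilde L M η j = 0 := if_pos (Or.inl hj)
    simp only [overhang, boxWord, if_pos hj, if_neg hj', bprev, hb,
      stepWord_of_flag_eq_zero hη.zero_le hj.2, List.append_assoc]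
    rw [← List.append_assoc (rep 0 _), ← List.append_assoc (rep 0 _),
      rep_append_rep 0 (by omega) (by omega), rep_append_rep 0 (by omega) (by omega), hinc]
    ring_nf
  by_cases hj' : j + 1 ∈ Iset L η
  · have hx := inc_nonneg_of_flag_eq_one hj'.1
    have hb : btilde L M η j = 0 := if_pos (Or.inr hj')
    simp only [overhang, boxWord, if_neg hj, if_pos hj', hb, stepWord_of_flag_eq_one hj'.1,
      List.nil_append, ← List.append_assoc]
    rw [rep_append_rep 1 (by omega) (by omega), rep_append_rep 1 (by omega) (by omega), hinc]
    ring_nf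
  · have hb : btilde L M η j = min (η j + M) ((L : ℤ) + 2 * M - (η (j + 1) + M)) :=
      if_neg (not_or.2 ⟨hj, hj'⟩)
    simp only [overhang, boxWord, if_neg hj, if_neg hj', bprev, hb, List.nil_append,
      ← List.append_assoc]
    congr 1
    rw [show η j + M - min (η j + M) ((L : ℤ) + 2 * M - (η (j + 1) + M)) =
      max 0 (inc L η (j + 1)) by omega, show (L : ℤ) + 2 * M - (η (j + 1) + M) -
      min (η j + M) ((L : ℤ) + 2 * M - (η (j + 1) + M)) = max 0 (-inc L η (j + 1)) by omega]
    rw [rep_max_append_rep_max_eq_stepWord hη.zero_le]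

theorem zero_notMem_Iset (L : ℤ) (η : ℕ → ℤ) : 0 ∉ Iset L η := fun h => zero_ne_one h.1

theorem BoundedState.boxesWord_succ_eq (hη : BoundedState L M η) (j : ℕ) :
    boxesWord L M η (j + 1) =
      rep 0 M ++ (peakWord (L + 2 * M) L η j ++ overhang L M η j) := by
  induction j with
  | zero =>
    have h0 := hη.zero_le
    simp only [boxesWord, boxWord, overhang, peakWord, stepWord_of_flag_eq_zero h0 (j := 0) rfl,
      if_neg (zero_notMem_Iset _ _), List.nil_append, bprev]
    rw [← List.append_assoc, rep_append_rep 0 (by omega) (by simpa [inc, prev] using h0), inc,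
      prev]
    ring_nf
  | succ j ih =>
    rw [boxesWord, ih, List.append_assoc, List.append_assoc, hη.overhang_append_boxWord, peakWord]
    simp only [List.append_assoc]

theorem BoundedState.isPrefix_rep_append_peakWord (hη : BoundedState L M η) (j : ℕ) :
    IsPrefix (rep 0 M ++ peakWord (L + 2 * M) L η j) (dTilde L M η) := by
  have h := hη.isPrefix_boxesWord (j + 1)
  rw [hη.boxesWord_succ_eq, ← List.append_assoc, isPrefix_append_iff] at h
  exact h.1

end Boxes

section Trimming

open RunScan

theorem feed_heightened_peak {α : Type*} [DecidableEq α] {k l n : ℤ} {S : RunScan α} {a b : α}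
    (ha : S.letter = a) (hba : b ≠ a) (hS : 0 ≤ S.length) (hk : 0 ≤ k) (hl : 0 ≤ l)
    (hn : 0 < n) : S.feed k (rep a (l + k) ++ rep b (l + k) ++ rep b n) =
      ⟨b, l + k + n, S.word 0 ++ rep a l⟩ := by
  subst ha
  rw [List.append_assoc, rep_append_rep b (by omega) hn.le, feed_append,
    feed_rep_letter k S (by omega), feed_rep_of_ne k (by exact hba) (by omega), word, word,
    List.append_assoc, rep_append_rep _ (by omega) hl]
  ring_nf

/-- The scan of the word `X` as if it were preceded by `0^m`. -/
def scan (k m : ℤ) (X : List ℤ) : RunScan ℤ := feed k ⟨0, m, []⟩ X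

theorem scan_append (k m : ℤ) (X Y : List ℤ) : scan k m (X ++ Y) = (scan k m X).feed k Y :=
  feed_append k _ X Y

theorem scan_rep_zero (k m : ℤ) {n : ℤ} (hn : 0 ≤ n) : scan k m (rep 0 n) = ⟨0, m + n, []⟩ :=
  feed_rep_letter k ⟨0, m, []⟩ hn

theorem scan_rep_zero_append (k m : ℤ) {n : ℤ} (hn : 0 ≤ n) (X : List ℤ) :
    scan k m (rep 0 n ++ X) = scan k (m + n) X := by
  rw [scan_append, scan_rep_zero k m hn, scan]

variable {L : ℤ} {η : ℕ → ℤ}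

/-- The scan `S`, which has read the path of `η` up to box `j` with peaks heightened by `L + k`,
trims these peaks to `L`. The current run counts as trimmed, hence the factor `1 - flag L η j`, if
it consists of `0`s; a run of `1`s is trimmed only at the next peak. -/
structure ScansPath (k L : ℤ) (η : ℕ → ℤ) (j : ℕ) (S : RunScan ℤ) : Prop where
  letter_eq : S.letter = flag L η j
  le_length : k * (1 - flag L η j) ≤ S.length
  word_eq : S.word (k * (1 - flag L η j)) = peakWord L L η j

theorem scansPath_zero (k : ℤ) (h0 : η 0 ≤ L) :
    ScansPath k L η 0 (scan k k (peakWord (L + k) L η 0)) := by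
  have hx := inc_nonpos_of_flag_eq_zero h0 (j := 0) rfl
  rw [peakWord, stepWord_of_flag_eq_zero h0 (j := 0) rfl, scan_rep_zero k k (neg_nonneg.2 hx)]
  constructor <;> simp [word, peakWord, stepWord_of_flag_eq_zero h0 (j := 0) rfl, flag, hx]

variable {k : ℤ} {j : ℕ} {S : RunScan ℤ}

theorem ScansPath.feed_of_flag_eq (hS : ScansPath k L η j S)
    (h : flag L η (j + 1) = flag L η j) :
    ScansPath k L η (j + 1) (S.feed k (stepWord L η (j + 1))) := by
  obtain ⟨hletter, hlen, hword⟩ := hS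
  have hn := abs_nonneg (inc L η (j + 1))
  have hj : j ∉ Iset L η := fun hj => zero_ne_one (hj.2.symm.trans (h.trans hj.1))
  rw [stepWord, h, ← hletter]
  rw [← hletter] at hlen hword
  refine ⟨?_, ?_, ?_⟩
  · rw [feed_rep_letter k S hn, h, hletter]
  · rw [feed_rep_letter k S hn, h, ← hletter]
    exact hlen.trans (le_add_of_nonneg_right hn)
  · rw [h, ← hletter, word_feed_rep_letter k hlen hn, hword, peakWord, if_neg hj, stepWord, h,
      ← hletter, List.nil_append]

theorem ScansPath.feed_of_mem_riseSet (hS : ScansPath k L η j S) (hj : j ∈ riseSet L η) :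
    ScansPath k L η (j + 1) (S.feed k (stepWord L η (j + 1))) := by
  obtain ⟨hletter, -, hword⟩ := hS
  obtain ⟨h, h'⟩ := hj
  have hj : j ∉ Iset L η := fun hj => zero_ne_one (h.symm.trans hj.1)
  have hx := inc_succ_pos h h'
  rw [h, sub_zero, mul_one] at hword
  rw [stepWord_of_flag_eq_one h', feed_rep_of_ne k (by omega) hx]
  constructor <;>
    simp [word, peakWord, hj, stepWord_of_flag_eq_one h', h', hx.le, ← hword]

theorem ScansPath.feed_of_mem_Iset (hS : ScansPath k L η j S) (hk : 0 ≤ k) (hL : 0 ≤ L)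
    (h0 : η 0 ≤ L) (hj : j ∈ Iset L η) :
    ScansPath k L η (j + 1)
      (S.feed k (rep 1 (L + k) ++ rep 0 (L + k) ++ stepWord L η (j + 1))) := by
  obtain ⟨hletter, hlen, hword⟩ := hS
  have ⟨h, h'⟩ := hj
  have hx := inc_succ_neg hj
  rw [h, sub_self, mul_zero] at hword hlen
  rw [stepWord_of_flag_eq_zero h0 h',
    feed_heightened_peak (hletter.trans h) zero_ne_one hlen hk hL (by omega)]
  refine ⟨h'.symm, by simp only [h']; omega, ?_⟩
  rw [h', sub_zero, mul_one, peakWord, if_pos hj, stepWord_of_flag_eq_zero h0 h', ← hword, word,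
    add_right_comm, add_sub_cancel_right, ← rep_append_rep 0 hL (by omega)]
  simp only [List.append_assoc]

theorem scansPath_scan_peakWord (hk : 0 ≤ k) (hL : 0 ≤ L) (h0 : η 0 ≤ L) (j : ℕ) :
    ScansPath k L η j (scan k k (peakWord (L + k) L η j)) := by
  induction j with
  | zero => exact scansPath_zero k h0
  | succ j ih =>
    rw [peakWord, scan_append]
    split_ifs with hj
    · exact ih.feed_of_mem_Iset hk hL h0 hj
    rw [List.nil_append]
    by_cases hsame : flag L η (j + 1) = flag L η j
    · exact ih.feed_of_flag_eq hsame
    · refine ih.feed_of_mem_riseSet ?_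
      rcases flag_eq_zero_or_one L η j with h | h <;>
        rcases flag_eq_zero_or_one L η (j + 1) with h' | h' <;> simp_all [riseSet, Iset]

end Trimming

section Runs

open RunScan

variable {M : ℕ} {s t : ℕ → ℕ}

/-- The first run of a raised soliton word loses only `M` letters: it is scanned as if it were
preceded by `0^M`. -/
theorem scan_runsWord_append_rep_zero {m z : ℕ} (hs : ∀ i, 2 ≤ i → i ≤ m → 1 ≤ s i)
    (ht : ∀ i, 1 ≤ i → i ≤ m → 1 ≤ t i) (hz : m ≠ 0 → 0 < z) :
    (scan (2 * M) M (runsWord s t m ++ rep 0 z)).letter = 0 ∧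
      (scan (2 * M) M (runsWord s t m ++ rep 0 z)).word (2 * M) =
        runsWord (shrinkS M s) (shrinkT M t) m ++ rep 0 (shrinkS M (fun _ => z) (m + 1)) := by
  induction m generalizing z with
  | zero =>
    rw [runsWord, List.nil_append, scan_rep_zero _ _ (Nat.cast_nonneg z)]
    refine ⟨rfl, ?_⟩
    simp only [word, runsWord, List.nil_append, rep, shrinkS, zero_add, if_true]
    congr 1
    omega
  | succ m ih =>
    have hsm : m ≠ 0 → 0 < s (m + 1) := fun hm => hs (m + 1) (by omega) le_rfl
    have htm : 0 < t (m + 1) := ht (m + 1) (by omega) le_rfl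
    obtain ⟨hletter, hword⟩ := ih (z := s (m + 1)) (fun i hi him => hs i hi (by omega))
      (fun i hi him => ht i hi (by omega)) hsm
    rw [runsWord, ← List.append_assoc, scan_append, scan_append]
    generalize scan (2 * M) M (runsWord s t m ++ rep 0 (s (m + 1))) = S at *
    rw [feed_rep_of_ne (S := S) _ (by omega) (by exact_mod_cast htm),
      feed_rep_of_ne _ zero_ne_one (by exact_mod_cast hz m.succ_ne_zero)]
    refine ⟨rfl, ?_⟩
    have hconst : shrinkS M (fun _ => s (m + 1)) (m + 1) = shrinkS M s (m + 1) := by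
      rcases m with - | m <;> rfl
    have hlast : shrinkS M (fun _ => z) (m + 1 + 1) = z - 2 * M := if_neg (by omega)
    have htwo : (2 * M : ℤ) = (2 * M : ℕ) := by push_cast; rfl
    rw [word, word, hword, hconst, hlast, runsWord, shrinkT, htwo, rep_natCast_sub,
      rep_natCast_sub]
    simp only [List.append_assoc]

end Runs

section Solitons

variable {L M : ℕ} {η : ℕ → ℤ}

theorem BoundedState.eventually_inc_eq (hη : BoundedState L M η) :
    ∀ᶠ j in atTop, inc L η j = -L := by
  obtain ⟨N, hN⟩ := eventually_atTop.1 hη.eventually_eq_zero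
  refine eventually_atTop.2 ⟨N + 1, fun j hj => ?_⟩
  obtain ⟨i, rfl⟩ := Nat.exists_eq_add_of_le' (Nat.one_le_of_lt hj)
  rw [inc, prev, hN i (by omega), hN (i + 1) (by omega), add_zero, zero_sub]

theorem BoundedState.eventually_flag_eq_zero (hL : 1 ≤ L) (hη : BoundedState L M η) :
    ∀ᶠ j in atTop, flag L η j = 0 := by
  filter_upwards [hη.eventually_inc_eq] with j hj
  refine (flag_eq_zero_or_one _ _ _).resolve_right fun h => ?_
  have := inc_nonneg_of_flag_eq_one h
  omega

theorem BoundedState.tendsto_length_peakWord (hL : 1 ≤ L) (hη : BoundedState L M η) (K : ℤ) :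
    Tendsto (fun j => (peakWord K L η j).length) atTop atTop := by
  refine tendsto_length_of_eventually_lt ?_
  filter_upwards [(tendsto_add_atTop_nat 1).eventually hη.eventually_inc_eq] with j hj
  have hstep : 0 < (stepWord L η (j + 1)).length := by
    rw [stepWord, length_rep, hj, abs_neg, Nat.abs_cast, Int.toNat_natCast]
    exact hL
  simp only [peakWord, List.length_append]
  omega

theorem IsSolitonSeq.eventually_isPrefix_peakWord {d : ℕ → ℤ} (hd : IsSolitonSeq L M η d)
    (hL : 1 ≤ L) (hη : BoundedState L M η) :
    ∀ᶠ j in atTop, IsPrefix (peakWord L L η j) d := by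
  obtain ⟨N, s, t, ⟨ht, hs, hw⟩, rfl⟩ := hd
  filter_upwards [hη.eventually_flag_eq_zero hL, (hη.tendsto_length_peakWord hL
    (L + 2 * M)).eventually_gt_atTop (runsWord s t N).length] with j hflag hlen
  obtain ⟨z, hz⟩ := Nat.exists_eq_add_of_lt hlen
  have hX := hw ▸ hη.isPrefix_rep_append_peakWord j
  have hword : rep 0 M ++ peakWord (L + 2 * M) L η j =
      runsWord s t N ++ rep 0 (M + z + 1 : ℕ) :=
    hX.eq_of_length_eq (isPrefix_runsWord_append_rep N s t _) (by
      simp only [List.length_append, length_rep, hz]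
      omega)
  obtain ⟨-, hshrink⟩ := scan_runsWord_append_rep_zero (M := M) hs ht
    (z := M + z + 1) fun _ => Nat.succ_pos _
  have hpeak := (scansPath_scan_peakWord (k := 2 * M) (by positivity) (Nat.cast_nonneg L)
    hη.zero_le j).word_eq
  rw [← hword, scan_rep_zero_append _ _ (Nat.cast_nonneg M), ← two_mul] at hshrink
  rw [hflag, sub_zero, mul_one, hshrink] at hpeak
  rw [← hpeak]
  exact isPrefix_runsWord_append_rep _ _ _ _

protected theorem BoundedState.evol (hη : BoundedState L M η) (hL : 1 ≤ L) :
    BoundedState L M (evol L η) where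
  neg_le j := by
    have hcarrier : -(M : ℤ) ≤ carrier L η j := by
      rcases j with - | j
      · simp [carrier, carrierM]
      · exact (hη.neg_le j).trans (le_add_of_nonneg_right (le_max_left _ _))
    exact le_min (by linarith [hη.le_add j]) hcarrier
  le_add j := (min_le_left _ _).trans (by linarith [hη.neg_le j])
  zero_le := (evol_zero hη.zero_le).trans_le (Nat.cast_nonneg L)
  eventually_eq_zero := by
    obtain ⟨N, hN⟩ := eventually_atTop.1 (hη.eventually_inc_eq.and hη.eventually_eq_zero)
    have hexcess (i : ℕ) : excess L η (N + i) ≤ max 0 (excess L η N - i) := by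
      induction i with
      | zero => simp
      | succ i ih =>
        rw [← add_assoc, excess_succ, (hN _ (Nat.le_add_right _ _)).1]
        omega
    refine eventually_atTop.2 ⟨N + (excess L η N).toNat + 1, fun j hj => ?_⟩
    obtain ⟨i, rfl⟩ := Nat.exists_eq_add_of_le' (Nat.one_le_of_lt hj)
    have h1 := hexcess (i - N)
    have h2 := hexcess (i + 1 - N)
    rw [Nat.add_sub_cancel' (by omega)] at h1 h2
    have := excess_nonneg L η (i + 1)
    have := excess_succ (L := (L : ℤ)) (η := η) (i + 1)
    have := (hN (i + 1) (by omega)).1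
    rw [evol_eq_prev_add, prev, (hN i (by omega)).2]
    omega

theorem IsSolitonSeq.evolOne_eq {d d' : ℕ → ℤ} (hd : IsSolitonSeq L M η d)
    (hd' : IsSolitonSeq L M (evol L η) d') (hL : 1 ≤ L) (hη : BoundedState L M η) :
    evolOne 0 d = d' := by
  refine eq_of_eventually_append_eq (X := fun j => output 0 (peakWord L L η j))
    ((hd.eventually_isPrefix_peakWord hL hη).mono fun j hj => hj.output 0)
    (hd'.eventually_isPrefix_peakWord hL (hη.evol hL))
    (((hη.evol hL).eventually_flag_eq_zero hL).mono fun j hj =>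
      output_peakWord_append (Nat.cast_nonneg L) hη.zero_le hj) ?_
    ((hη.evol hL).tendsto_length_peakWord hL L)
  simpa only [length_output] using hη.tendsto_length_peakWord hL L

end Solitons

section Background

variable {L M : ℕ} {η θ : ℕ → ℤ}

open scoped Classical in
/-- The contribution of index `j` to `c(η)`: a single entry, or nothing if `j` is marked. -/
noncomputable def bgEntry (L : ℤ) (η : ℕ → ℤ) (j : ℕ) : List ℤ :=
  if marked L η j then [] else [min (η j) (L - η (j + 1))]

/-- The part of `c(η)` contributed by the indices below `j`. -/
noncomputable def bgWord (L : ℤ) (η : ℕ → ℤ) : ℕ → List ℤ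
  | 0 => []
  | j + 1 => bgWord L η j ++ bgEntry L η j

open scoped Classical in
theorem length_bgWord (L : ℤ) (η : ℕ → ℤ) (j : ℕ) :
    (bgWord L η j).length = Nat.count (fun i => ¬ marked L η i) j := by
  induction j with
  | zero => simp [bgWord]
  | succ j ih =>
    rw [bgWord, List.length_append, ih, Nat.count_succ, bgEntry]
    by_cases hm : marked L η j <;> simp [hm]

open scoped Classical in
theorem isPrefix_bgWord (L M : ℕ) (η : ℕ → ℤ) (j : ℕ) : IsPrefix (bgWord L η j) (bg L M η) := by
  induction j with
  | zero => exact isPrefix_nil _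
  | succ j ih =>
    rw [bgWord, isPrefix_append_iff, length_bgWord, bgEntry]
    refine ⟨ih, ?_⟩
    split_ifs with hm
    · exact isPrefix_nil _
    · refine isPrefix_cons_iff.2 ⟨?_, isPrefix_nil _⟩
      rw [add_zero, bg, Nat.nth_count (p := fun i => ¬ marked (L : ℤ) η i) hm, btilde, if_neg hm]
      omega

open scoped Classical in
theorem BoundedState.tendsto_length_bgWord (hL : 1 ≤ L) (hη : BoundedState L M η) :
    Tendsto (fun j => (bgWord L η j).length) atTop atTop := by
  have hflag := hη.eventually_flag_eq_zero hL
  refine tendsto_length_of_eventually_lt ?_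
  filter_upwards [hflag, (tendsto_add_atTop_nat 1).eventually hflag] with j hj hj'
  have hm : ¬ marked (L : ℤ) η j :=
    not_or.2 ⟨fun h => zero_ne_one (hj.symm.trans h.1), fun h => zero_ne_one (hj'.symm.trans h.1)⟩
  simp [bgWord, bgEntry, hm]

/-- The background entry at box `j` of a path which runs through the box with flag `0`. -/
noncomputable def lowEntry (L : ℤ) (η : ℕ → ℤ) (j : ℕ) : List ℤ :=
  if flag L η j = 0 ∧ flag L η (j + 1) = 0 then [η j] else []

/-- The background entry at box `j` of a path which runs through the box with flag `1`. -/
noncomputable def highEntry (L : ℤ) (η : ℕ → ℤ) (j : ℕ) : List ℤ :=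
  if flag L η j = 1 ∧ flag L η (j + 1) = 1 then [L - η j] else []

theorem lowEntry_append_highEntry_comm (L : ℤ) (η : ℕ → ℤ) (j : ℕ) :
    lowEntry L η j ++ highEntry L η j = highEntry L η j ++ lowEntry L η j := by
  rcases flag_eq_zero_or_one L η j with h | h <;> simp [lowEntry, highEntry, h]

theorem bgEntry_eq_low_append_high (L : ℤ) (η : ℕ → ℤ) (j : ℕ) :
    bgEntry L η j = lowEntry L η j ++ highEntry L η (j + 1) := by
  have hmarked : marked L η j ↔ (flag L η j = 1 ∧ flag L η (j + 1) = 0) ∨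
      (flag L η (j + 1) = 1 ∧ flag L η (j + 1 + 1) = 0) := Iff.rfl
  have hinc : inc L η (j + 1) = η j + η (j + 1) - L := rfl
  rcases flag_eq_zero_or_one L η (j + 1) with h | h
  · have := inc_succ_nonpos h
    have hmin : min (η j) (L - η (j + 1)) = η j := by omega
    rcases flag_eq_zero_or_one L η j with h' | h' <;>
      simp [bgEntry, lowEntry, highEntry, hmarked, h, h', hmin]
  · have := inc_nonneg_of_flag_eq_one h
    have hmin : min (η j) (L - η (j + 1)) = L - η (j + 1) := by omega
    rcases flag_eq_zero_or_one L η (j + 1 + 1) with h' | h' <;>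
      simp [bgEntry, lowEntry, highEntry, hmarked, h, h', hmin]

theorem bgEntry_eq_high_append_low_evol {L : ℤ} (h0 : η 0 ≤ L) (j : ℕ) :
    bgEntry L η j = highEntry L (evol L η) j ++ lowEntry L (evol L η) (j + 1) := by
  have hmarked : marked L η j ↔ (flag L (evol L η) j = 0 ∧ flag L (evol L η) (j + 1) = 1) ∨
      (flag L (evol L η) (j + 1) = 0 ∧ flag L (evol L η) (j + 1 + 1) = 1) := by
    rw [marked, Iset_eq_riseSet_evol h0]
    rfl
  have hinc : inc L η (j + 1) = η j + η (j + 1) - L := rfl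
  rcases flag_eq_zero_or_one L (evol L η) (j + 1) with h | h
  · have := unload_eq_zero_of_flag_evol_eq_zero h
    have := unload_add_idle L η (j + 1)
    have := evol_eq_sub_idle L η (j + 1)
    have hmin : min (η j) (L - η (j + 1)) = evol L η (j + 1) := by omega
    rcases flag_eq_zero_or_one L (evol L η) (j + 1 + 1) with h' | h' <;>
      simp [bgEntry, lowEntry, highEntry, hmarked, h, h', hmin]
  · have := idle_eq_zero_of_flag_evol_succ_eq_one h
    have := evol_eq_sub_idle L η j
    have hmin : min (η j) (L - η (j + 1)) = L - evol L η j := by omega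
    rcases flag_eq_zero_or_one L (evol L η) j with h' | h' <;>
      simp [bgEntry, lowEntry, highEntry, hmarked, h, h', hmin]

theorem cons_zero_bgWord_append_highEntry {L : ℤ} (h0 : η 0 ≤ L) (j : ℕ) :
    0 :: bgWord L η j ++ highEntry L (evol L η) j =
      bgWord L (evol L η) j ++ lowEntry L (evol L η) j := by
  induction j with
  | zero =>
    have h1 : flag L (evol L η) 1 = 0 := (flag_eq_zero_or_one _ _ _).resolve_right fun h =>
      zero_notMem_Iset L η (Iset_eq_riseSet_evol h0 ▸ ⟨rfl, h⟩)
    rw [bgWord, bgWord, highEntry, lowEntry, if_neg fun h => zero_ne_one h.1, if_pos ⟨rfl, h1⟩,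
      evol_zero h0, List.append_nil, List.nil_append]
  | succ j ih =>
    rw [bgWord, bgWord, bgEntry_eq_high_append_low_evol h0, bgEntry_eq_low_append_high,
      ← List.append_assoc (bgWord L (evol L η) j), ← ih]
    simp only [List.cons_append, List.append_assoc, lowEntry_append_highEntry_comm]

theorem BoundedState.lam_bg (hL : 1 ≤ L) (hη : BoundedState L M η) :
    lam (bg L M η) = bg L M (evol L η) := by
  refine eq_of_eventually_append_eq (X := fun j => 0 :: bgWord L η j)
    (.of_forall fun j => isPrefix_cons_iff.2 ⟨rfl, isPrefix_bgWord L M η j⟩)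
    (.of_forall fun j => isPrefix_bgWord L M (evol L η) j)
    (.of_forall fun j => cons_zero_bgWord_append_highEntry hη.zero_le j) ?_
    ((hη.evol hL).tendsto_length_bgWord hL)
  exact (tendsto_add_atTop_nat 1).comp (hη.tendsto_length_bgWord hL)

end Background

theorem mem_S.boundedState {L M : ℕ} {η : ℕ → ℤ} (hη : mem_S L M η) : BoundedState L M η where
  neg_le j := (hη.2.1 j).1
  le_add j := (hη.2.1 j).2
  zero_le := hη.2.2.1.trans (Nat.cast_nonneg L)
  eventually_eq_zero := eventually_atTop.2 hη.1

end BBS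

theorem stmt_13_general {L M : ℕ} (hL : 1 ≤ L) {η : ℕ → ℤ} (hη : BoundedState L M η) :
    lam (bg L M η) = bg L M (evol L η) ∧
    (∀ d d' : ℕ → ℤ, IsSolitonSeq L M η d → IsSolitonSeq L M (evol L η) d' →
      evolOne 0 d = d') :=
  ⟨hη.lam_bg hL, fun _ _ hd hd' => hd.evolOne_eq hd' hL hη⟩

/-- Theorem 2.5: the decomposition linearizes the time evolution:
`Λ(c(η)) = c(T_L(η))` and `T_1(d(η)) = d(T_L(η))`. -/
theorem stmt_13 (L M : ℕ) (hL : 1 ≤ L) (η : ℕ → ℤ) (hη : mem_S L M η) :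
    lam (bg L M η) = bg L M (evol L η) ∧
    (∀ d d' : ℕ → ℤ, IsSolitonSeq L M η d → IsSolitonSeq L M (evol L η) d' →
      evolOne 0 d = d') :=
  stmt_13_general hL hη.boundedState
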